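/- The number 211 + 2^448 is prime. -/

import Mathlib

/-!
Pocklington's criterion: let `d ∣ n - 1`, and suppose that `a ^ (n - 1) = 1` modulo `n` and that
`a ^ ((n - 1) / q) - 1` is a unit for every prime `q ∣ d`. Modulo any prime `p ∣ n` the order of `a`
is then a multiple of `d`, hence `d ∣ p - 1`; so all prime factors of `n` exceed `d`, and `n` is
prime as soon as `n < (d + 1) ^ 2`. For `n = 2 ^ 448 + 211` one has
`n - 1 = 2 * 1571 * 51487 * q` with `q` prime, and the primality of `q` is reduced by the same
criterion to that of ever smaller primes, `d` being each time a product of large prime factors of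
the predecessor.
-/

theorem dvd_orderOf_of_pow_div_prime_ne_one {M : Type*} [Monoid M] {x : M} {m d : ℕ}
    (hx : x ^ m = 1) (hd : d ∣ m) (hne : ∀ q : ℕ, q.Prime → q ∣ d → x ^ (m / q) ≠ 1) :
    d ∣ orderOf x := by
  obtain ⟨k, hk⟩ := orderOf_dvd_of_pow_eq_one hx
  suffices d.Coprime k from this.dvd_of_dvd_mul_right (hk ▸ hd)
  refine Nat.coprime_of_dvd fun q hq hqd hqk => hne q hq hqd ?_
  rw [hk, Nat.mul_div_assoc _ hqk]
  exact orderOf_dvd_iff_pow_eq_one.1 (dvd_mul_right _ _)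

section Pocklington

variable {n d : ℕ} {a : ZMod n}

theorem dvd_sub_one_of_isUnit_pow_div_prime_sub_one (hn : 1 < n) (ha : a ^ (n - 1) = 1)
    (hd : d ∣ n - 1) (hu : ∀ q : ℕ, q.Prime → q ∣ d → IsUnit (a ^ ((n - 1) / q) - 1))
    {p : ℕ} (hp : p.Prime) (hpn : p ∣ n) : d ∣ p - 1 := by
  have := Fact.mk hp
  let f := ZMod.castHom hpn (ZMod p)
  have hfa : f a ^ (n - 1) = 1 := by rw [← map_pow, ha, map_one]
  have hfa_ne_one (q : ℕ) (hq : q.Prime) (hqd : q ∣ d) : f a ^ ((n - 1) / q) ≠ 1 := by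
    rw [← sub_ne_zero, ← map_pow, ← map_one f, ← map_sub]
    exact ((hu q hq hqd).map f).ne_zero
  have hfa_ne_zero : f a ≠ 0 :=
    ((IsUnit.of_pow_eq_one ha (Nat.sub_ne_zero_of_lt hn)).map f).ne_zero
  exact (dvd_orderOf_of_pow_div_prime_ne_one hfa hd hfa_ne_one).trans
    (ZMod.orderOf_dvd_card_sub_one hfa_ne_zero)

theorem pocklington_primality (hn : 1 < n) (ha : a ^ (n - 1) = 1) (hd : d ∣ n - 1)
    (hu : ∀ q : ℕ, q.Prime → q ∣ d → IsUnit (a ^ ((n - 1) / q) - 1))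
    (hnd : n < (d + 1) ^ 2) : n.Prime := by
  by_contra hnp
  have hp : n.minFac.Prime := Nat.minFac_prime hn.ne'
  have hdp : d ≤ n.minFac - 1 := Nat.le_of_dvd (Nat.sub_pos_of_lt hp.one_lt)
    (dvd_sub_one_of_isUnit_pow_div_prime_sub_one hn ha hd hu hp n.minFac_dvd)
  have hle : (d + 1) ^ 2 ≤ n := calc
    (d + 1) ^ 2 ≤ n.minFac ^ 2 := Nat.pow_le_pow_left (Nat.add_le_of_le_sub hp.one_le hdp) 2
    _ ≤ n := Nat.minFac_sq_le_self (zero_lt_one.trans hn) hnp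
  exact hnd.not_ge hle

theorem pocklington_primality_of_list (a : ZMod n) (l : List ℕ) (hl : ∀ q ∈ l, q.Prime)
    (hn : 1 < n) (hd : l.prod ∣ n - 1) (hnd : n < (l.prod + 1) ^ 2) (ha : a ^ (n - 1) = 1)
    (hu : ∀ q ∈ l, IsUnit (a ^ ((n - 1) / q) - 1)) : n.Prime :=
  pocklington_primality hn ha hd (fun q hq hqd => hu q <|
    mem_list_primes_of_dvd_prod hq.prime (fun r hr => (hl r hr).prime) hqd) hnd

end Pocklington

theorem prime_3542379124223 : Nat.Prime 3542379124223 := by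
  refine pocklington_primality_of_list 2 [5179, 20431] (by norm_num) (by norm_num) (by norm_num)
    (by norm_num) (by reduce_mod_char) ?_
  refine List.forall_mem_cons.2 ⟨?_, List.forall_mem_singleton.2 ?_⟩ <;> norm_num only <;>
    reduce_mod_char <;> exact (ZMod.isUnit_iff_coprime _ _).2 (by norm_num)

theorem prime_3935932240641481 : Nat.Prime 3935932240641481 := by
  refine pocklington_primality_of_list 2 [103, 27779911] (by norm_num) (by norm_num) (by norm_num)
    (by norm_num) (by reduce_mod_char) ?_
  refine List.forall_mem_cons.2 ⟨?_, List.forall_mem_singleton.2 ?_⟩ <;> norm_num only <;>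
    reduce_mod_char <;> exact (ZMod.isUnit_iff_coprime _ _).2 (by norm_num)

theorem prime_4273644064289353659734599117 : Nat.Prime 4273644064289353659734599117 := by
  refine pocklington_primality_of_list 2 [19391, 3542379124223]
    (by simpa using ⟨by norm_num, prime_3542379124223⟩) (by norm_num) (by norm_num)
    (by norm_num) (by reduce_mod_char) ?_
  refine List.forall_mem_cons.2 ⟨?_, List.forall_mem_singleton.2 ?_⟩ <;> norm_num only <;>
    reduce_mod_char <;> exact (ZMod.isUnit_iff_coprime _ _).2 (by norm_num)

theorem prime_37879645758302544629093639399975151697728441422063 :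
    Nat.Prime 37879645758302544629093639399975151697728441422063 := by
  refine pocklington_primality_of_list 2 [4273644064289353659734599117]
    (List.forall_mem_singleton.2 prime_4273644064289353659734599117) (by norm_num) (by norm_num)
    (by norm_num) (by reduce_mod_char) ?_
  norm_num only [List.forall_mem_singleton]
  reduce_mod_char
  exact (ZMod.isUnit_iff_coprime _ _).2 (by norm_num)

set_option exponentiation.threshold 500 in
theorem prime_two_pow_448_add_210_div : Nat.Prime ((2 ^ 448 + 210) / (2 * 1571 * 51487)) := by
  refine pocklington_primality_of_list 2
    [3935932240641481, 37879645758302544629093639399975151697728441422063]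
    (by simpa using ⟨prime_3935932240641481,
      prime_37879645758302544629093639399975151697728441422063⟩)
    (by norm_num) (by norm_num) (by norm_num) (by norm_num only; reduce_mod_char) ?_
  refine List.forall_mem_cons.2 ⟨?_, List.forall_mem_singleton.2 ?_⟩ <;> norm_num only <;>
    reduce_mod_char <;> exact (ZMod.isUnit_iff_coprime _ _).2 (by norm_num)

set_option exponentiation.threshold 500 in
theorem stmt_11 : Nat.Prime (211 + 2 ^ 448) := by
  set n := 211 + 2 ^ 448
  set q := (2 ^ 448 + 210) / (2 * 1571 * 51487)
  have hq : q.Prime := prime_two_pow_448_add_210_div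
  have two_pow_sub_one : (2 : ZMod n) ^ (n - 1) = 1 := by
    norm_num only [n]; reduce_mod_char
  have isUnit_two_pow_div : IsUnit ((2 : ZMod n) ^ ((n - 1) / q) - 1) := by
    norm_num only [n, q]; reduce_mod_char
    exact (ZMod.isUnit_iff_coprime _ _).2 (by norm_num)
  exact pocklington_primality_of_list 2 [q] (List.forall_mem_singleton.2 hq)
    (by norm_num [n]) (by norm_num [n, q]) (by norm_num [n, q]) two_pow_sub_one
    (List.forall_mem_singleton.2 isUnit_two_pow_div)
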